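/- arXiv:1712.04013 — 2 statements merged into one kernel-verified Lean document; each statement's English description precedes it below -/
import Mathlib

section
/- (Error estimate on the invariant measure of discretized Feynman–Kac semigroups.) In the torus setting described in the context, suppose: (i) the family (Q_Δt^W)_{Δt ∈ (0,Δt₀]} of weighted evolution operators on the torus maps S to S, each Q_Δt^W satisfies a minorization condition (so it has a unique invariant probability measure ν_{W,Δt}), and admits the expansion Q_Δt^W φ = φ + Σ_{k=1}^{p+1} Δt^k Ã_k φ + Δt^{p+2} R_{W,Δt} φ with ‖R_{W,Δt}φ‖_{C⁰} ≤ c ‖φ‖_{C^m} uniformly in Δt ∈ (0,Δt₀], where Ã_1 φ = A_1 φ + Wφ and A_1 1 = 0; (ii) (stability) for every g ∈ S_W there is a unique u ∈ S_W with (A_1 + W − λ)u = g, and for every g ∈ Ŝ_W there is a unique v ∈ Ŝ_W with (A_1* + W − λ)v = g; (iii) (spectral consistency) (A_1 + W)ĥ_W = λ ĥ_W, and ∫ W dν_W = λ; (iv) (invariance) for each k = 1, …, p there is a_k ∈ ℝ with ∫ (Ã_k φ) dν_W = a_k ∫ φ dν_W for all φ ∈ S. Define g̃ = −(Ã_{p+1})*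 h_W + h_W · (∫ Ã_{p+1} ĥ_W dν_W)/(∫ ĥ_W dν_W) (which lies in Ŝ_W), let v ∈ Ŝ_W be the unique solution of (A_1* + W − λ)v = g̃, set f₀ = v/h_W and f = f₀ − ∫ f₀ dν_W. Then there exist Δt* ∈ (0,Δt₀], C > 0 and m' ∈ ℕ such that for all Δt ∈ (0,Δt*] and all φ ∈ S: |∫ φ dν_{W,Δt} − ∫ φ dν_W − Δt^p ∫ φ f dν_W| ≤ C Δt^{p+1} ‖φ‖_{C^{m'}}. -/
open MeasureTheory ProbabilityTheory Finset

/-- The d-dimensional torus `ℝ^d/ℤ^d`. -/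
abbrev Torus (d : ℕ) := Fin d → AddCircle (1:ℝ)

/-- The canonical projection `ℝ^d → ℝ^d/ℤ^d`. -/
noncomputable def Torus.proj {d : ℕ} (q : Fin d → ℝ) : Torus d := fun i => (q i : AddCircle (1:ℝ))

/-- Partial derivative in the i-th coordinate direction. -/
noncomputable def pderiv' {d : ℕ} (i : Fin d) (f : (Fin d → ℝ) → ℝ) (q : Fin d → ℝ) : ℝ :=
  fderiv ℝ f q (Pi.single i 1)

/-- ℤ^d-periodicity. -/
def ZPeriodic {d : ℕ} (f : (Fin d → ℝ) → ℝ) : Prop :=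
  ∀ (q : Fin d → ℝ) (m : Fin d → ℤ), f (fun i => q i + (m i : ℝ)) = f q

/-- Iterated partial derivative `∂^α` along a list of coordinate directions. -/
noncomputable def iterPDeriv {d : ℕ} : List (Fin d) → ((Fin d → ℝ) → ℝ) → (Fin d → ℝ) → ℝ
  | [], f => f
  | i :: l, f => pderiv' i (iterPDeriv l f)

/-- The C^m norm: `‖f‖_{C^m} = sup_{|α| ≤ m} sup_q |∂^α f(q)|`. -/
noncomputable def CmNorm {d : ℕ} (m : ℕ) (f : (Fin d → ℝ) → ℝ) : ℝ :=
  ⨆ p : {l : List (Fin d) // l.length ≤ m} × (Fin d → ℝ), |iterPDeriv p.1.1 f p.2|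

/-- A function on the torus is smooth when its ℤ^d-periodic lift to ℝ^d is smooth;
this identifies S with the smooth ℤ^d-periodic functions on ℝ^d. -/
def TSmooth {d : ℕ} (φ : Torus d → ℝ) : Prop :=
  ContDiff ℝ (⊤ : ℕ∞) (fun q : Fin d → ℝ => φ (Torus.proj q))

/-- The C^m norm of a function on the torus, computed through its periodic lift. -/
noncomputable def TCmNorm {d : ℕ} (m : ℕ) (φ : Torus d → ℝ) : ℝ :=
  CmNorm m (fun q : Fin d → ℝ => φ (Torus.proj q))

/-- The unit cube `[0,1)^d`, a fundamental domain of the torus. -/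
def unitCube (d : ℕ) : Set (Fin d → ℝ) := Set.univ.pi fun _ => Set.Ico (0:ℝ) 1

/-- The action of a weighted evolution operator given by a kernel. -/
noncomputable def evolOp {X : Type*} [MeasurableSpace X] (κ : Kernel X X) (φ : X → ℝ) : X → ℝ :=
  fun q => ∫ q', φ q' ∂(κ q)

/-- Bounded measurable real-valued functions. -/
def BddMeas {X : Type*} [MeasurableSpace X] (φ : X → ℝ) : Prop :=
  Measurable φ ∧ ∃ C : ℝ, ∀ x, |φ x| ≤ C

/-- Minorization condition. -/
def Minorizes {X : Type*} [MeasurableSpace X] (Q : (X → ℝ) → (X → ℝ)) (ε : ℝ)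
    (η : Measure X) : Prop :=
  ∀ φ : X → ℝ, BddMeas φ → (∀ x, 0 ≤ φ x) → ∀ q,
    ε * ∫ x, φ x ∂η ≤ Q φ q ∧ Q φ q ≤ ε⁻¹ * ∫ x, φ x ∂η

/-- Fixed-point (stationarity) equation characterizing the invariant probability measure. -/
def FixedPt {X : Type*} [MeasurableSpace X] (κ : Kernel X X) (μ : Measure X) : Prop :=
  ∀ φ : X → ℝ, BddMeas φ →
    ∫ q, evolOp κ φ q ∂μ = (∫ q, evolOp κ (fun _ => (1:ℝ)) q ∂μ) * ∫ q, φ q ∂μ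

section AbstractPart
variable {V : Type*} [AddCommGroup V] [Module ℝ V]

theorem fk_chain (p : ℕ) (hp : 1 ≤ p) (B : ℕ → V →ₗ[ℝ] V) (π : V →ₗ[ℝ] ℝ) (one : V)
    (hone : π one = 1) (hB : ∀ j < p, ∀ ψ, π (B j ψ) = 0)
    (hsolve : ∀ g, π g = 0 → ∃ u, B 0 u = g) (ψ0 : V) (n : ℕ) (hn : n ≤ p) :
    ∃ ψ : ℕ → V, ψ 0 = ψ0 ∧ ∀ m, 1 ≤ m → m ≤ n →
      ∑ j ∈ range (m + 1), B j (ψ (m - j)) = if m = p then π (B p ψ0) • one else 0 := by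
  induction n with
  | zero => exact ⟨fun _ => ψ0, rfl, fun m h1 h2 => by omega⟩
  | succ n ih =>
    obtain ⟨ψ, h0, hψ⟩ := ih (by omega)
    obtain ⟨u, hu⟩ := hsolve ((if n + 1 = p then π (B p ψ0) • one else 0)
      - ∑ j ∈ range (n + 1), B (j + 1) (ψ (n - j))) (by
        rw [map_sub, map_sum]
        split_ifs with h
        · rw [sum_range_succ, Finset.sum_eq_zero]
          · simp [hone, h, h0]
          · intro j hj
            rw [mem_range] at hj
            exact hB _ (by omega) _
        · rw [Finset.sum_eq_zero]
          · simp
          · intro j hj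
            rw [mem_range] at hj
            exact hB _ (by omega) _)
    refine ⟨Function.update ψ (n + 1) u, by simpa using h0, fun m h1 h2 => ?_⟩
    by_cases hm : m = n + 1
    · subst hm
      rw [sum_range_succ']
      have : ∑ k ∈ range (n + 1), B (k + 1) (Function.update ψ (n + 1) u (n + 1 - (k + 1)))
          = ∑ j ∈ range (n + 1), B (j + 1) (ψ (n - j)) := by
        apply sum_congr rfl
        intro j hj
        rw [Function.update_of_ne (by omega)]
        congr 2
        omega
      rw [this]
      simp [hu]
    · rw [← hψ m h1 (by omega)]
      apply sum_congr rfl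
      intro j hj
      rw [Function.update_of_ne (by omega)]

theorem fk_key (p : ℕ) (hp : 1 ≤ p) (B : ℕ → V →ₗ[ℝ] V) (π : V →ₗ[ℝ] ℝ) (one : V)
    (hone : π one = 1) (hB : ∀ j < p, ∀ ψ, π (B j ψ) = 0)
    (hsolve : ∀ g, π g = 0 → ∃ u, B 0 u = g)
    (T : ℝ) (hT1 : T ≤ 1) (μ : ℝ → V →ₗ[ℝ] ℝ)
    (hμb : ∀ ψ, ∃ K, ∀ t ∈ Set.Ioc 0 T, |μ t ψ| ≤ K)
    (hμone : ∀ t ∈ Set.Ioc 0 T, μ t one = 1)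
    (D : ℝ → ℝ)
    (hexp : ∀ ψ, ∃ K, ∀ t ∈ Set.Ioc 0 T,
      |D t * μ t ψ - ∑ j ∈ range (p + 1), t ^ (j + 1) * μ t (B j ψ)| ≤ K * t ^ (p + 2))
    (ψ0 : V) :
    ∃ K M, ∀ t ∈ Set.Ioc 0 T, ∃ s, |s| ≤ M ∧ |s - μ t ψ0| ≤ M * t ∧
      |D t * s - t * (μ t (B 0 ψ0) + t ^ p * π (B p ψ0))| ≤ K * t ^ (p + 2) := by
  obtain ⟨ψ, h0, hψ⟩ := fk_chain p hp B π one hone hB hsolve ψ0 p le_rfl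
  choose K hK using hμb
  choose E hE using hexp
  refine ⟨∑ k ∈ range (p + 1), |E (ψ k)| +
    ∑ j ∈ range (p + 1), ∑ k ∈ range (p + 1), |K (B j (ψ k))|,
    ∑ k ∈ range (p + 1), |K (ψ k)|, fun t ht => ?_⟩
  have ht0 : 0 < t := ht.1
  have ht1 : t ≤ 1 := ht.2.trans hT1
  have htk : ∀ k, t ^ k ≤ 1 := fun k => pow_le_one₀ ht0.le ht1
  refine ⟨∑ k ∈ range (p + 1), t ^ k * μ t (ψ k), ?_, ?_, ?_⟩
  · refine (abs_sum_le_sum_abs _ _).trans (sum_le_sum fun k _ => ?_)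
    rw [abs_mul, abs_of_pos (pow_pos ht0 k)]
    calc t ^ k * |μ t (ψ k)| ≤ 1 * |K (ψ k)| :=
          mul_le_mul (htk k) ((hK _ t ht).trans (le_abs_self _)) (abs_nonneg _) zero_le_one
      _ = _ := one_mul _
  · rw [sum_range_succ', sum_range_succ']
    simp only [pow_zero, one_mul, h0, add_sub_cancel_right]
    rw [add_mul, sum_mul]
    refine (abs_sum_le_sum_abs _ _).trans (le_trans (sum_le_sum fun k _ => ?_)
      (le_add_of_nonneg_right (by positivity)))
    rw [abs_mul, abs_of_pos (pow_pos ht0 _), mul_comm, pow_succ]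
    have h1 := (hK (ψ (k+1)) t ht).trans (le_abs_self _)
    have h2 : t ^ k * t ≤ t := by nlinarith [htk k]
    exact mul_le_mul h1 h2 (by positivity) (abs_nonneg _)
  · have hdiag : ∑ j ∈ range (p + 1), ∑ k ∈ range (p + 1 - j), t ^ (j + k + 1) * μ t (B j (ψ k))
        = t * (μ t (B 0 ψ0) + t ^ p * π (B p ψ0)) := by
      rw [← sum_range_diag_flip (p + 1) (fun j k => t ^ (j + k + 1) * μ t (B j (ψ k)))]
      have : ∀ m ∈ range (p + 1), ∑ k ∈ range (m + 1),
          t ^ (k + (m - k) + 1) * μ t (B k (ψ (m - k))) =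
          t ^ (m + 1) * μ t (∑ k ∈ range (m + 1), B k (ψ (m - k))) := by
        intro m _
        rw [map_sum, mul_sum]
        apply sum_congr rfl
        intro k hk
        rw [mem_range] at hk
        rw [Nat.add_sub_cancel' (by omega)]
      rw [sum_congr rfl this]
      obtain ⟨r, rfl⟩ : ∃ r, p = r + 1 := ⟨p - 1, by omega⟩
      rw [sum_range_succ, sum_range_succ', Finset.sum_eq_zero]
      · rw [hψ (r + 1) (by omega) le_rfl]
        simp [h0, hμone t ht]
        ring
      · intro k hk
        rw [mem_range] at hk
        rw [hψ (k + 1) (by omega) (by omega), if_neg (by omega)]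
        simp
    rw [← hdiag]
    have e1 : |D t * ∑ k ∈ range (p + 1), t ^ k * μ t (ψ k)
        - ∑ j ∈ range (p + 1), ∑ k ∈ range (p + 1), t ^ (j + k + 1) * μ t (B j (ψ k))|
        ≤ (∑ k ∈ range (p + 1), |E (ψ k)|) * t ^ (p + 2) := by
      rw [sum_comm, mul_sum, ← sum_sub_distrib, sum_mul]
      refine (abs_sum_le_sum_abs _ _).trans (sum_le_sum fun k _ => ?_)
      have : D t * (t ^ k * μ t (ψ k)) - ∑ j ∈ range (p + 1), t ^ (j + k + 1) * μ t (B j (ψ k))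
          = t ^ k * (D t * μ t (ψ k) - ∑ j ∈ range (p + 1), t ^ (j + 1) * μ t (B j (ψ k))) := by
        rw [mul_sub, mul_sum]
        congr 1
        · ring
        · apply sum_congr rfl
          intro j _
          ring
      rw [this, abs_mul, abs_of_pos (pow_pos ht0 k)]
      have h2 : |D t * μ t (ψ k) - ∑ j ∈ range (p + 1), t ^ (j + 1) * μ t (B j (ψ k))|
        ≤ |E (ψ k)| * t ^ (p + 2) := (hE (ψ k) t ht).trans
          (mul_le_mul_of_nonneg_right (le_abs_self _) (by positivity))
      calc _ ≤ 1 * (|E (ψ k)| * t ^ (p + 2)) := mul_le_mul (htk k) h2 (abs_nonneg _) zero_le_one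
        _ = _ := one_mul _
    have e2 : |∑ j ∈ range (p + 1), ∑ k ∈ range (p + 1), t ^ (j + k + 1) * μ t (B j (ψ k))
        - ∑ j ∈ range (p + 1), ∑ k ∈ range (p + 1 - j), t ^ (j + k + 1) * μ t (B j (ψ k))|
        ≤ (∑ j ∈ range (p + 1), ∑ k ∈ range (p + 1), |K (B j (ψ k))|) * t ^ (p + 2) := by
      rw [← sum_sub_distrib, sum_mul]
      refine (abs_sum_le_sum_abs _ _).trans (sum_le_sum fun j hj => ?_)
      rw [← sum_sdiff (range_subset_range.2 (Nat.sub_le (p + 1) j)), add_sub_cancel_right]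
      refine (abs_sum_le_sum_abs _ _).trans ?_
      rw [sum_mul]
      refine (sum_le_sum fun k hk => ?_).trans (sum_le_sum_of_subset_of_nonneg
        (sdiff_subset (s := range (p + 1)) (t := range (p + 1 - j)))
        (fun k _ _ => by positivity))
      rw [mem_sdiff, mem_range, mem_range] at hk
      rw [abs_mul, abs_of_pos (pow_pos ht0 _), mul_comm]
      exact mul_le_mul ((hK _ t ht).trans (le_abs_self _))
        (pow_le_pow_of_le_one ht0.le ht1 (by omega)) (by positivity) (abs_nonneg _)
    rw [add_mul]
    refine le_trans ?_ (add_le_add e1 e2)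
    refine le_trans (le_of_eq ?_) (abs_add_le _ _)
    congr 1
    ring

theorem fk_abstract (p : ℕ) (hp : 1 ≤ p) (B : ℕ → V →ₗ[ℝ] V) (π : V →ₗ[ℝ] ℝ) (one : V)
    (hone : π one = 1) (hB : ∀ j < p, ∀ ψ, π (B j ψ) = 0)
    (hsolve : ∀ g, π g = 0 → ∃ u, B 0 u = g)
    (T : ℝ) (hT0 : 0 < T) (hT1 : T ≤ 1) (μ : ℝ → V →ₗ[ℝ] ℝ)
    (hμb : ∀ ψ, ∃ K, ∀ t ∈ Set.Ioc 0 T, |μ t ψ| ≤ K)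
    (hμone : ∀ t ∈ Set.Ioc 0 T, μ t one = 1)
    (D : ℝ → ℝ)
    (hexp : ∀ ψ, ∃ K, ∀ t ∈ Set.Ioc 0 T,
      |D t * μ t ψ - ∑ j ∈ range (p + 1), t ^ (j + 1) * μ t (B j ψ)| ≤ K * t ^ (p + 2))
    (h : V) (hh0 : B 0 h = 0) (hhp : π (B p h) = 0)
    (m0 : ℝ) (hm0 : 0 < m0) (hhm : ∀ t ∈ Set.Ioc 0 T, m0 ≤ μ t h)
    (v : V →ₗ[ℝ] ℝ) (hv : ∀ ψ, v (B 0 ψ) = - π (B p ψ)) :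
    ∃ τ ∈ Set.Ioc 0 T, ∀ φ, ∃ K, ∀ t ∈ Set.Ioc 0 τ,
      |μ t φ - π φ - t ^ p * (v φ - v one * π φ)| ≤ K * t ^ (p + 1) := by
  have key := fk_key p hp B π one hone hB hsolve T hT1 μ hμb hμone D hexp
  obtain ⟨K, M, hKM⟩ := key h
  have hτ : ∃ τ ∈ Set.Ioc 0 T, M * τ ≤ m0 / 2 ∧ 0 ≤ M := by
    have hM : 0 ≤ M := by
      obtain ⟨s, hs, -⟩ := hKM T ⟨hT0, le_rfl⟩
      exact (abs_nonneg _).trans hs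
    refine ⟨min T (m0 / 2 / (M + 1)), ⟨lt_min hT0 (by positivity), min_le_left _ _⟩, ?_, hM⟩
    calc M * min T (m0 / 2 / (M + 1)) ≤ (M + 1) * (m0 / 2 / (M + 1)) :=
          mul_le_mul (by linarith) (min_le_right _ _) (le_min hT0.le (by positivity)) (by linarith)
      _ = m0 / 2 := by field_simp
  obtain ⟨τ, hτT, hMτ, hM⟩ := hτ
  have hD : ∀ t ∈ Set.Ioc 0 τ, |D t| ≤ (2 * K / m0) * t ^ (p + 2) := by
    intro t ht
    have htT : t ∈ Set.Ioc 0 T := ⟨ht.1, ht.2.trans hτT.2⟩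
    obtain ⟨s, -, hs, hs2⟩ := hKM t htT
    rw [hh0, hhp] at hs2
    simp only [map_zero, mul_zero, add_zero, sub_zero] at hs2
    have hsm : m0 / 2 ≤ s := by
      have := hhm t htT
      have h3 : M * t ≤ M * τ := mul_le_mul_of_nonneg_left ht.2 hM
      have := (abs_le.1 hs).1
      linarith
    rw [abs_mul, abs_of_pos (by linarith : 0 < s)] at hs2
    have h4 : |D t| * (m0 / 2) ≤ K * t ^ (p + 2) :=
      (mul_le_mul_of_nonneg_left hsm (abs_nonneg _)).trans hs2
    have : |D t| ≤ K * t ^ (p + 2) / (m0 / 2) := by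
      rw [le_div_iff₀ (by positivity)]; exact h4
    refine this.trans (le_of_eq ?_)
    field_simp
  refine ⟨τ, hτT, fun φ => ?_⟩
  obtain ⟨ψ0, hψ0⟩ := hsolve (φ - π φ • one) (by simp [hone])
  obtain ⟨K', M', hKM'⟩ := key ψ0
  refine ⟨K' + |2 * K / m0| * |M'|, fun t ht => ?_⟩
  have htT : t ∈ Set.Ioc 0 T := ⟨ht.1, ht.2.trans hτT.2⟩
  obtain ⟨s, hs, -, hs2⟩ := hKM' t htT
  have hc : π (B p ψ0) = -(v φ - v one * π φ) := by
    have := hv ψ0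
    rw [hψ0] at this
    simp only [map_sub, map_smul, smul_eq_mul] at this
    linarith
  rw [hψ0, hc] at hs2
  simp only [map_sub, map_smul, smul_eq_mul, hμone t htT, mul_one] at hs2
  have h5 : |D t * s| ≤ |2 * K / m0| * |M'| * t ^ (p + 2) := by
    rw [abs_mul]
    calc |D t| * |s| ≤ (|2 * K / m0| * t ^ (p + 2)) * |M'| := by
          refine mul_le_mul ((hD t ht).trans ?_) (hs.trans (le_abs_self _)) (abs_nonneg _) ?_
          · exact mul_le_mul_of_nonneg_right (le_abs_self _) (pow_nonneg ht.1.le _)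
          · exact mul_nonneg (abs_nonneg _) (pow_nonneg ht.1.le _)
      _ = _ := by ring
  have h6 : t * |μ t φ - π φ - t ^ p * (v φ - v one * π φ)| ≤
      t * ((K' + |2 * K / m0| * |M'|) * t ^ (p + 1)) := by
    have : t * |μ t φ - π φ - t ^ p * (v φ - v one * π φ)| =
      |D t * s - (D t * s - t * (μ t φ - π φ + t ^ p * -(v φ - v one * π φ)))| := by
      nth_rewrite 1 [← abs_of_pos ht.1]
      rw [← abs_mul]
      congr 1
      ring
    rw [this]
    refine (abs_sub _ _).trans ?_
    refine (add_le_add h5 hs2).trans (le_of_eq ?_)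
    ring
  exact le_of_mul_le_mul_left h6 ht.1

end AbstractPart
section TorusPart
variable {d : ℕ}

theorem torus_proj_quot : IsOpenQuotientMap (Torus.proj (d := d)) :=
  IsOpenQuotientMap.piMap (f := fun (_ : Fin d) (x : ℝ) => (x : AddCircle (1:ℝ)))
    (fun _ => QuotientAddGroup.isOpenQuotientMap_mk)

theorem TSmooth.cont {φ : Torus d → ℝ} (h : TSmooth φ) : Continuous φ :=
  torus_proj_quot.isQuotientMap.continuous_iff.2 (ContDiff.continuous h)

theorem TSmooth.bdd {φ : Torus d → ℝ} (h : TSmooth φ) : ∃ C, 0 ≤ C ∧ ∀ x, |φ x| ≤ C := by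
  obtain ⟨C, hC⟩ := isCompact_univ.exists_bound_of_continuousOn h.cont.continuousOn
  exact ⟨C, (abs_nonneg _).trans (hC 0 trivial), fun x => hC x trivial⟩

theorem TSmooth.bddMeas {φ : Torus d → ℝ} (h : TSmooth φ) : BddMeas φ :=
  ⟨h.cont.measurable, by obtain ⟨C, -, h⟩ := h.bdd; exact ⟨C, h⟩⟩

theorem TSmooth.integrable {φ : Torus d → ℝ} (h : TSmooth φ) (μ : Measure (Torus d))
    [IsFiniteMeasure μ] : Integrable φ μ := by
  obtain ⟨C, -, hC⟩ := h.bdd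
  exact Integrable.of_bound h.cont.measurable.aestronglyMeasurable C
    (Filter.Eventually.of_forall hC)

theorem TSmooth.add {φ ψ : Torus d → ℝ} (h : TSmooth φ) (h' : TSmooth ψ) : TSmooth (φ + ψ) :=
  ContDiff.add h h'

theorem TSmooth.mul {φ ψ : Torus d → ℝ} (h : TSmooth φ) (h' : TSmooth ψ) :
    TSmooth (fun x => φ x * ψ x) :=
  ContDiff.mul h h'

theorem TSmooth.smul {φ : Torus d → ℝ} (c : ℝ) (h : TSmooth φ) : TSmooth (c • φ) :=
  ContDiff.const_smul c h

theorem TSmooth.const (c : ℝ) : TSmooth (fun _ : Torus d => c) := contDiff_const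

/-- The space S. -/
def SmSpace (d : ℕ) : Submodule ℝ (Torus d → ℝ) where
  carrier := {φ | TSmooth φ}
  add_mem' := TSmooth.add
  zero_mem' := TSmooth.const 0
  smul_mem' := fun c _ h => TSmooth.smul c h

theorem pderiv_contDiff {f : (Fin d → ℝ) → ℝ} (hf : ContDiff ℝ (⊤ : ℕ∞) f) (i : Fin d) :
    ContDiff ℝ (⊤ : ℕ∞) (pderiv' i f) :=
  (hf.fderiv_right (m := (⊤ : ℕ∞)) (by simp)).clm_apply contDiff_const

theorem iterPDeriv_contDiff {f : (Fin d → ℝ) → ℝ} (hf : ContDiff ℝ (⊤ : ℕ∞) f)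
    (l : List (Fin d)) : ContDiff ℝ (⊤ : ℕ∞) (iterPDeriv l f) := by
  induction l with
  | nil => exact hf
  | cons i l ih => exact pderiv_contDiff ih i

theorem iterPDeriv_per {f : (Fin d → ℝ) → ℝ} (hf : ZPeriodic f)
    (l : List (Fin d)) : ZPeriodic (iterPDeriv l f) := by
  induction l with
  | nil => exact hf
  | cons i l ih =>
    intro q m
    have : (fun x => iterPDeriv l f (x + fun i => (m i : ℝ))) = iterPDeriv l f := by
      funext x; exact ih x m
    change fderiv ℝ (iterPDeriv l f) (q + fun i => (m i : ℝ)) _ = fderiv ℝ (iterPDeriv l f) q _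
    rw [← fderiv_comp_add_right, this]

theorem iterPDeriv_append (l : List (Fin d)) (i : Fin d) (f : (Fin d → ℝ) → ℝ) :
    iterPDeriv (l ++ [i]) f = iterPDeriv l (pderiv' i f) := by
  induction l with
  | nil => rfl
  | cons j l ih => simp only [List.cons_append, iterPDeriv, ih]

theorem iterPDeriv_smul {f : (Fin d → ℝ) → ℝ} (hf : ContDiff ℝ (⊤ : ℕ∞) f) (c : ℝ)
    (l : List (Fin d)) : iterPDeriv l (c • f) = c • iterPDeriv l f := by
  induction l with
  | nil => rfl
  | cons i l ih =>
    funext q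
    simp only [iterPDeriv, ih, pderiv', Pi.smul_apply]
    rw [fderiv_const_smul ((iterPDeriv_contDiff hf l).differentiable (by simp) q)]
    rfl

theorem per_bdd {f : (Fin d → ℝ) → ℝ} (hf : Continuous f) (hp : ZPeriodic f) :
    ∃ C, ∀ q, |f q| ≤ C := by
  obtain ⟨C, hC⟩ := (isCompact_univ_pi (fun _ : Fin d => isCompact_Icc (a := (0:ℝ)) (b := 1))).exists_bound_of_continuousOn hf.continuousOn
  refine ⟨C, fun q => ?_⟩
  have h1 := hp (fun i => Int.fract (q i)) (fun i => ⌊q i⌋)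
  simp only [Int.fract_add_floor] at h1
  rw [h1]
  exact hC _ (fun i _ => ⟨Int.fract_nonneg _, (Int.fract_lt_one _).le⟩)

theorem tper (φ : Torus d → ℝ) : ZPeriodic (fun q : Fin d → ℝ => φ (Torus.proj q)) := by
  intro q m
  have : Torus.proj (fun i => q i + (m i : ℝ)) = Torus.proj q := by
    funext i
    have := AddCircle.coe_add_period (1:ℝ)
    simp only [Torus.proj]
    rw [AddCircle.coe_add]
    have h0 : ((m i : ℝ) : AddCircle (1:ℝ)) = 0 := by
      rw [AddCircle.coe_eq_zero_iff]
      exact ⟨m i, by simp⟩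
    rw [h0, add_zero]
  simp only [this]

theorem bddAbove_Cm {φ : Torus d → ℝ} (h : TSmooth φ) (m : ℕ) :
    BddAbove (Set.range fun p : {l : List (Fin d) // l.length ≤ m} × (Fin d → ℝ) =>
      |iterPDeriv p.1.1 (fun q : Fin d → ℝ => φ (Torus.proj q)) p.2|) := by
  have : ∀ l : List (Fin d), ∃ C, ∀ q,
      |iterPDeriv l (fun q : Fin d → ℝ => φ (Torus.proj q)) q| ≤ C := fun l =>
    per_bdd (iterPDeriv_contDiff h l).continuous (iterPDeriv_per (tper φ) l)
  choose C hC using this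
  have hfin : Finite {l : List (Fin d) // l.length ≤ m} :=
    (List.finite_length_le (Fin d) m).to_subtype
  obtain ⟨M, hM⟩ := (Set.finite_range (fun l : {l : List (Fin d) // l.length ≤ m} => C l.1)).bddAbove
  refine ⟨M, ?_⟩
  rintro _ ⟨⟨l, q⟩, rfl⟩
  exact (hC l.1 q).trans (hM ⟨l, rfl⟩)

theorem le_TCm {φ : Torus d → ℝ} (h : TSmooth φ) {m : ℕ} {l : List (Fin d)} (hl : l.length ≤ m)
    (q : Fin d → ℝ) :
    |iterPDeriv l (fun q : Fin d → ℝ => φ (Torus.proj q)) q| ≤ TCmNorm m φ :=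
  le_ciSup (bddAbove_Cm h m) (⟨l, hl⟩, q)

theorem TCm_nonneg (φ : Torus d → ℝ) (m : ℕ) : 0 ≤ TCmNorm m φ :=
  Real.iSup_nonneg fun _ => abs_nonneg _

theorem iteratedFDeriv_bound (k : ℕ) : ∀ (f : (Fin d → ℝ) → ℝ), ContDiff ℝ (⊤ : ℕ∞) f →
    ∀ Bd : ℝ, (∀ l : List (Fin d), l.length = k → ∀ x, |iterPDeriv l f x| ≤ Bd) →
    ∀ x, ‖iteratedFDeriv ℝ k f x‖ ≤ (d : ℝ) ^ k * Bd := by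
  induction k with
  | zero =>
    intro f hf Bd hB x
    simpa [iterPDeriv] using hB [] rfl x
  | succ k ih =>
    intro f hf Bd hB x
    rw [← norm_iteratedFDeriv_fderiv]
    have hfd : fderiv ℝ f = fun y => ∑ i : Fin d,
        (ContinuousLinearMap.toSpanSingleton ℝ
          (ContinuousLinearMap.proj i : (Fin d → ℝ) →L[ℝ] ℝ)) (pderiv' i f y) := by
      funext y
      ext w
      simp only [ContinuousLinearMap.toSpanSingleton_apply, _root_.sum_apply,
        _root_.smul_apply, ContinuousLinearMap.proj_apply, smul_eq_mul, pderiv']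
      conv_lhs => rw [pi_eq_sum_univ' w]
      rw [map_sum]
      refine sum_congr rfl fun i _ => ?_
      rw [map_smul, smul_eq_mul, mul_comm]
    have hsm : ∀ i : Fin d, ContDiff ℝ (⊤ : ℕ∞) (pderiv' i f) := pderiv_contDiff hf
    rw [hfd, iteratedFDeriv_fun_sum_apply (fun i _ => by
      refine ContDiff.contDiffAt ?_
      exact (ContinuousLinearMap.contDiff _).comp ((hsm i).of_le (by exact_mod_cast le_top)))]
    refine (norm_sum_le _ _).trans ?_
    have : ∀ i ∈ (Finset.univ : Finset (Fin d)), ‖iteratedFDeriv ℝ k (fun y =>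
        (ContinuousLinearMap.toSpanSingleton ℝ
          (ContinuousLinearMap.proj i : (Fin d → ℝ) →L[ℝ] ℝ)) (pderiv' i f y)) x‖
        ≤ (d : ℝ) ^ k * Bd := by
      intro i _
      refine ((ContinuousLinearMap.toSpanSingleton ℝ
          (ContinuousLinearMap.proj i : (Fin d → ℝ) →L[ℝ] ℝ)).norm_iteratedFDeriv_comp_left
          ((hsm i).contDiffAt (x := x)) (by exact_mod_cast le_top)).trans ?_
      have h1 : ‖ContinuousLinearMap.toSpanSingleton ℝ
          (ContinuousLinearMap.proj i : (Fin d → ℝ) →L[ℝ] ℝ)‖ ≤ 1 := by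
        rw [ContinuousLinearMap.norm_toSpanSingleton]
        refine ContinuousLinearMap.opNorm_le_bound _ zero_le_one fun w => ?_
        rw [one_mul]
        exact norm_le_pi_norm w i
      have h2 := ih (pderiv' i f) (hsm i) Bd (fun l hl y => by
        rw [← iterPDeriv_append]
        exact hB _ (by simp [hl]) y) x
      calc _ ≤ 1 * ((d : ℝ) ^ k * Bd) := mul_le_mul h1 h2 (norm_nonneg _) zero_le_one
        _ = _ := one_mul _
    refine (sum_le_sum this).trans (le_of_eq ?_)
    simp
    ring

end TorusPart
theorem fk_ub {d : ℕ} {ι : Type*} (L : ι → SmSpace d →ₗ[ℝ] ℝ)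
    (hc : ∀ i, ∃ K : ℝ, ∀ φ : SmSpace d, ∀ Bd : ℝ, (∀ x, |φ.1 x| ≤ Bd) → |L i φ| ≤ K * Bd)
    (hb : ∀ φ, ∃ K : ℝ, ∀ i, |L i φ| ≤ K) :
    ∃ C : ℝ, 0 < C ∧ ∃ m : ℕ, ∀ i (φ : SmSpace d), |L i φ| ≤ C * TCmNorm m φ.1 := by
  by_contra! H
  choose K0 hK0 using hc
  have hK : ∀ i (φ : SmSpace d) (Bd : ℝ), (∀ x, |φ.1 x| ≤ Bd) → |L i φ| ≤ |K0 i| * Bd := by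
    intro i φ Bd h
    exact (hK0 i φ Bd h).trans (mul_le_mul_of_nonneg_right (le_abs_self _)
      ((abs_nonneg _).trans (h 0)))
  have step : ∀ (n : ℕ) (s : SmSpace d × {δ : ℝ // 0 < δ}), ∃ r : ι × SmSpace d,
      (∀ l : List (Fin d), l.length ≤ n → ∀ q,
        |iterPDeriv l (fun q : Fin d → ℝ => r.2.1 (Torus.proj q)) q| ≤ s.2.1) ∧
      (n : ℝ) ≤ |L r.1 (s.1 + r.2)| := by
    rintro n ⟨x, δ, hδ⟩
    obtain ⟨i, φ, hφ⟩ := H ((n + 1) / δ) (by positivity) n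
    have hN := TCm_nonneg φ.1 n
    have hL : 0 < |L i φ| := lt_of_le_of_lt (by positivity) hφ
    have small : ∀ c : ℝ, |c| = (n + 1) / |L i φ| → ∀ l : List (Fin d), l.length ≤ n → ∀ q,
        |iterPDeriv l (fun q : Fin d → ℝ => (c • φ).1 (Torus.proj q)) q| ≤ δ := by
      intro c hcc l hl q
      have : (fun q : Fin d → ℝ => (c • φ).1 (Torus.proj q)) =
        c • (fun q : Fin d → ℝ => φ.1 (Torus.proj q)) := rfl
      rw [this, iterPDeriv_smul φ.2 c l, Pi.smul_apply, smul_eq_mul, abs_mul, hcc]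
      have h1 := le_TCm φ.2 hl q
      calc _ ≤ (n + 1) / |L i φ| * TCmNorm n φ.1 := mul_le_mul_of_nonneg_left h1 (by positivity)
        _ = ((n + 1) / δ * TCmNorm n φ.1) / |L i φ| * δ := by field_simp
        _ ≤ 1 * δ := by
          refine mul_le_mul_of_nonneg_right ?_ hδ.le
          rw [div_le_one hL]
          exact hφ.le
        _ = δ := one_mul _
    set c : ℝ := (n + 1) / |L i φ| with hcdef
    have hcpos : 0 < c := by positivity
    have hcL : |L i (c • φ)| = n + 1 := by
      rw [map_smul, smul_eq_mul, abs_mul, abs_of_pos hcpos, hcdef]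
      field_simp
    by_cases hcase : (n : ℝ) ≤ |L i (x + c • φ)|
    · exact ⟨(i, c • φ), small c (abs_of_pos hcpos), hcase⟩
    · refine ⟨(i, (-c) • φ), small (-c) (by rw [abs_neg, abs_of_pos hcpos]), ?_⟩
      by_contra hcase2
      simp only [not_le] at hcase hcase2
      have e : L i (c • φ) = (L i (x + c • φ) - L i (x + (-c) • φ)) / 2 := by
        simp only [map_add, map_smul, smul_eq_mul]
        ring
      rw [e] at hcL
      have h3 := abs_sub (L i (x + c • φ)) (L i (x + (-c) • φ))
      rw [abs_div, abs_of_pos (by norm_num : (0:ℝ) < 2)] at hcL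
      linarith
  choose r hr1 hr2 using step
  let st : ℕ → SmSpace d × {δ : ℝ // 0 < δ} := fun n => Nat.rec (0, ⟨1, one_pos⟩)
    (fun n s => (s.1 + (r n s).2, ⟨min (s.2.1 / 2) (1 / (2 * (|K0 (r n s).1| + 1))),
      lt_min (half_pos s.2.2) (by positivity)⟩)) n
  let x : ℕ → SmSpace d := fun n => (st n).1
  let δ : ℕ → ℝ := fun n => (st n).2.1
  let ξ : ℕ → SmSpace d := fun n => (r n (st n)).2
  let I : ℕ → ι := fun n => (r n (st n)).1
  have hx0 : x 0 = 0 := rfl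
  have hxs : ∀ n, x (n + 1) = x n + ξ n := fun n => rfl
  have hδ0 : ∀ n, 0 < δ n := fun n => (st n).2.2
  have hδ1 : ∀ n, δ (n + 1) ≤ δ n / 2 := fun n => min_le_left _ _
  have hδ2 : ∀ n, δ (n + 1) ≤ 1 / (2 * (|K0 (I n)| + 1)) := fun n => min_le_right _ _
  have hξ : ∀ n, ∀ l : List (Fin d), l.length ≤ n → ∀ q,
        |iterPDeriv l (fun q : Fin d → ℝ => (ξ n).1 (Torus.proj q)) q| ≤ δ n :=
    fun n => hr1 n (st n)
  have hbig : ∀ n : ℕ, (n : ℝ) ≤ |L (I n) (x (n + 1))| := fun n => hr2 n (st n)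
  clear_value x δ ξ I
  have hgeo : ∀ n j, δ (n + j) ≤ δ n * (1 / 2) ^ j := by
    intro n j
    induction j with
    | zero => simp
    | succ j ih =>
      have := hδ1 (n + j)
      rw [← add_assoc, pow_succ]
      linarith
  have hsum : Summable δ := by
    refine Summable.of_nonneg_of_le (fun n => (hδ0 n).le) (fun n => ?_)
      (summable_geometric_two.mul_left (δ 0))
    simpa using hgeo 0 n
  have hξ0 : ∀ n y, |(ξ n).1 y| ≤ δ n := by
    intro n y
    obtain ⟨q, rfl⟩ := torus_proj_quot.surjective y
    exact hξ n [] (by simp) q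
  have hξs : ∀ y, Summable (fun n => (ξ n).1 y) := fun y =>
    Summable.of_norm_bounded hsum (fun n => hξ0 n y)
  let Φ : SmSpace d := ⟨fun y => ∑' n, (ξ n).1 y, by
    change ContDiff ℝ (⊤ : ℕ∞) (fun q : Fin d → ℝ => ∑' n, (ξ n).1 (Torus.proj q))
    refine contDiff_tsum_of_eventually (v := fun k n => (d : ℝ) ^ k * δ n)
      (fun n => (ξ n).2) (fun k _ => hsum.mul_left _) (fun k _ => ?_)
    rw [Nat.cofinite_eq_atTop]
    filter_upwards [Filter.eventually_ge_atTop k] with n hn q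
    exact iteratedFDeriv_bound k _ (ξ n).2 (δ n) (fun l hl q => hξ n l (by omega) q) q⟩
  have hxsum : ∀ n y, (x n).1 y = ∑ k ∈ range n, (ξ k).1 y := by
    intro n y
    induction n with
    | zero => rw [hx0]; rfl
    | succ n ih => rw [hxs, sum_range_succ, ← ih]; rfl
  have htail : ∀ n y, |(Φ - x (n + 1)).1 y| ≤ δ (n + 1) * 2 := by
    intro n y
    have e : (Φ - x (n + 1)).1 y = ∑' j, (ξ (j + (n + 1))).1 y := by
      have h1 := (hξs y).sum_add_tsum_nat_add (n + 1)
      have h2 : (Φ - x (n + 1)).1 y = (∑' k, (ξ k).1 y) - (x (n + 1)).1 y := rfl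
      rw [h2, hxsum]
      linarith
    rw [e]
    rw [← Real.norm_eq_abs]
    refine tsum_of_norm_bounded (hasSum_geometric_two.mul_left (δ (n + 1))) (fun j => ?_)
    refine (hξ0 _ y).trans ?_
    rw [add_comm j]
    exact hgeo _ _
  obtain ⟨M, hM⟩ := hb Φ
  obtain ⟨n, hn⟩ := exists_nat_gt (M + 1)
  have h1 := hK (I n) (Φ - x (n + 1)) _ (htail n)
  have h2 : |K0 (I n)| * (δ (n + 1) * 2) ≤ 1 := by
    have h3 := hδ2 n
    rw [le_div_iff₀ (by positivity)] at h3
    nlinarith [hδ0 (n + 1)]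
  have h4 : L (I n) (x (n + 1)) = L (I n) Φ - L (I n) (Φ - x (n + 1)) := by
    rw [map_sub]; ring
  have h5 := hbig n
  rw [h4] at h5
  have := abs_sub (L (I n) Φ) (L (I n) (Φ - x (n + 1)))
  have := hM (I n)
  linarith

theorem TSmooth.pos_lb {d : ℕ} {φ : Torus d → ℝ} (h : TSmooth φ) (hp : ∀ x, 0 < φ x) :
    ∃ m, 0 < m ∧ ∀ x, m ≤ φ x := by
  obtain ⟨x, -, hx⟩ := isCompact_univ.exists_isMinOn ⟨0, trivial⟩ h.cont.continuousOn
  exact ⟨φ x, hp x, fun y => hx (Set.mem_univ y)⟩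

/-- Integration against a weight. -/
noncomputable def intL {d : ℕ} (μ : Measure (Torus d)) [IsFiniteMeasure μ] (w : Torus d → ℝ)
    (hw : TSmooth w) : SmSpace d →ₗ[ℝ] ℝ where
  toFun φ := ∫ x, φ.1 x * w x ∂μ
  map_add' φ ψ := by
    rw [← integral_add ((TSmooth.mul φ.2 hw).integrable μ) ((TSmooth.mul ψ.2 hw).integrable μ)]
    congr 1
    funext x
    exact add_mul _ _ _
  map_smul' c φ := by
    rw [RingHom.id_apply, smul_eq_mul, ← integral_const_mul]
    congr 1
    funext x
    exact mul_assoc _ _ _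

theorem intL_apply {d : ℕ} (μ : Measure (Torus d)) [IsFiniteMeasure μ] (w : Torus d → ℝ)
    (hw : TSmooth w) (φ : SmSpace d) : intL μ w hw φ = ∫ x, φ.1 x * w x ∂μ := rfl

theorem intL_bound {d : ℕ} (μ : Measure (Torus d)) [IsFiniteMeasure μ] (w : Torus d → ℝ)
    (hw : TSmooth w) : ∃ K : ℝ, ∀ φ : SmSpace d, ∀ Bd : ℝ, (∀ x, |φ.1 x| ≤ Bd) →
      |intL μ w hw φ| ≤ K * Bd := by
  obtain ⟨C, hC0, hC⟩ := hw.bdd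
  refine ⟨C * μ.real Set.univ, fun φ Bd hB => ?_⟩
  rw [intL_apply, ← Real.norm_eq_abs]
  refine (norm_integral_le_of_norm_le_const (C := Bd * C) (Filter.Eventually.of_forall
    fun x => ?_)).trans (le_of_eq (by ring))
  rw [Real.norm_eq_abs, abs_mul]
  exact mul_le_mul (hB x) (hC x) (abs_nonneg _) ((abs_nonneg _).trans (hB x))

theorem invariant_measure_error_estimate
    (d p : ℕ) (hd : 1 ≤ d) (hp : 1 ≤ p)
    (W : Torus d → ℝ) (hWsm : TSmooth W)
    (ν : Measure (Torus d)) (hνprob : IsProbabilityMeasure ν)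
    (ρ : (Fin d → ℝ) → ℝ) (hρsm : ContDiff ℝ (⊤ : ℕ∞) ρ) (hρper : ZPeriodic ρ)
    (hρpos : ∀ x, 0 < ρ x)
    (hνρ : ∀ φ : Torus d → ℝ, BddMeas φ →
      ∫ x, φ x ∂ν = ∫ x in unitCube d, φ (Torus.proj x) * ρ x)
    (lam : ℝ)
    (hWhat hWfun : Torus d → ℝ)
    (hhatS : TSmooth hWhat) (hhatpos : ∀ x, 0 < hWhat x) (hhatnorm : ∫ x, hWhat x ∂ν = 1)
    (hfunS : TSmooth hWfun) (hfunpos : ∀ x, 0 < hWfun x) (hfunnorm : ∫ x, hWfun x ∂ν = 1)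
    (A1 : (Torus d → ℝ) → Torus d → ℝ) (At : ℕ → (Torus d → ℝ) → Torus d → ℝ)
    (hAt1 : ∀ φ x, At 1 φ x = A1 φ x + W x * φ x)
    (hA1one : ∀ x, A1 (fun _ => (1:ℝ)) x = 0)
    (hA1map : ∀ φ, TSmooth φ → TSmooth (A1 φ))
    (hA1add : ∀ φ ψ, TSmooth φ → TSmooth ψ → A1 (φ + ψ) = A1 φ + A1 ψ)
    (hA1smul : ∀ (c : ℝ) (φ), TSmooth φ → A1 (c • φ) = c • A1 φ)
    (hA1bdd : ∃ c : ℝ, 0 ≤ c ∧ ∃ m : ℕ, ∀ φ, TSmooth φ → ∀ x, |A1 φ x| ≤ c * TCmNorm m φ)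
    (hAtmap : ∀ k ∈ Finset.Icc 2 (p + 1), ∀ φ, TSmooth φ → TSmooth (At k φ))
    (hAtadd : ∀ k ∈ Finset.Icc 2 (p + 1), ∀ φ ψ, TSmooth φ → TSmooth ψ →
      At k (φ + ψ) = At k φ + At k ψ)
    (hAtsmul : ∀ k ∈ Finset.Icc 2 (p + 1), ∀ (c : ℝ) (φ), TSmooth φ →
      At k (c • φ) = c • At k φ)
    (hAtbdd : ∀ k ∈ Finset.Icc 2 (p + 1), ∃ c : ℝ, 0 ≤ c ∧ ∃ m : ℕ,
      ∀ φ, TSmooth φ → ∀ x, |At k φ x| ≤ c * TCmNorm m φ)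
    (A1star : (Torus d → ℝ) → Torus d → ℝ)
    (hA1starmap : ∀ φ, TSmooth φ → TSmooth (A1star φ))
    (hA1staradj : ∀ φ ψ, TSmooth φ → TSmooth ψ →
      ∫ x, A1 φ x * ψ x ∂ν = ∫ x, φ x * A1star ψ x ∂ν)
    (Atp1star : (Torus d → ℝ) → Torus d → ℝ)
    (hAtp1starmap : ∀ φ, TSmooth φ → TSmooth (Atp1star φ))
    (hAtp1staradj : ∀ φ ψ, TSmooth φ → TSmooth ψ →
      ∫ x, At (p + 1) φ x * ψ x ∂ν = ∫ x, φ x * Atp1star ψ x ∂ν)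
    -- (i) the family of weighted evolution operators, its minorization, its invariant
    -- measures and its uniform expansion
    (Δt0 : ℝ) (hΔt0 : 0 < Δt0)
    (κ : ℝ → Kernel (Torus d) (Torus d)) (hκfin : ∀ Δt, IsFiniteKernel (κ Δt))
    (hmin : ∀ Δt ∈ Set.Ioc (0:ℝ) Δt0, ∃ ε ∈ Set.Ioo (0:ℝ) 1, ∃ η : Measure (Torus d),
      IsProbabilityMeasure η ∧ Minorizes (evolOp (κ Δt)) ε η)
    (hQS : ∀ Δt ∈ Set.Ioc (0:ℝ) Δt0, ∀ φ, TSmooth φ → TSmooth (evolOp (κ Δt) φ))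
    (νd : ℝ → Measure (Torus d))
    (hνd : ∀ Δt ∈ Set.Ioc (0:ℝ) Δt0, IsProbabilityMeasure (νd Δt) ∧ FixedPt (κ Δt) (νd Δt))
    (hexp : ∃ c : ℝ, 0 < c ∧ ∃ m : ℕ, ∀ Δt ∈ Set.Ioc (0:ℝ) Δt0, ∀ φ, TSmooth φ → ∀ q,
      |evolOp (κ Δt) φ q - φ q - ∑ k ∈ Finset.Icc 1 (p + 1), Δt ^ k * At k φ q|
        ≤ c * Δt ^ (p + 2) * TCmNorm m φ)
    -- (ii) stability of `A_1 + W - λ` and of its adjoint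
    (hstab : ∀ g : Torus d → ℝ, TSmooth g → ∫ x, g x * hWfun x ∂ν = 0 →
      ∃! u : Torus d → ℝ, TSmooth u ∧ ∫ x, u x * hWfun x ∂ν = 0 ∧
        ∀ x, A1 u x + W x * u x - lam * u x = g x)
    (hstabstar : ∀ g : Torus d → ℝ, TSmooth g → ∫ x, g x * hWhat x ∂ν = 0 →
      ∃! u : Torus d → ℝ, TSmooth u ∧ ∫ x, u x * hWhat x ∂ν = 0 ∧
        ∀ x, A1star u x + W x * u x - lam * u x = g x)
    -- (iii) spectral consistency
    (hspec : ∀ x, A1 hWhat x + W x * hWhat x = lam * hWhat x)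
    (hWlam : ∫ x, W x * hWfun x ∂ν = lam)
    -- (iv) invariance
    (hinv : ∀ k ∈ Finset.Icc 1 p, ∃ a : ℝ, ∀ φ, TSmooth φ →
      ∫ x, At k φ x * hWfun x ∂ν = a * ∫ x, φ x * hWfun x ∂ν)
    -- the correction function: v = h_W f₀ solves `(A_1* + W - λ)(h_W f₀) = g̃`
    (v : Torus d → ℝ) (hvS : TSmooth v) (hvzero : ∫ x, v x * hWhat x ∂ν = 0)
    (hveq : ∀ x, A1star v x + W x * v x - lam * v x =
      -(Atp1star hWfun x) + hWfun x *
        ((∫ y, At (p + 1) hWhat y * hWfun y ∂ν) / (∫ y, hWhat y * hWfun y ∂ν))) :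
    -- conclusion, with `f = v/h_W − ∫ (v/h_W) dν_W`
    ∃ Δtstar ∈ Set.Ioc (0:ℝ) Δt0, ∃ C : ℝ, 0 < C ∧ ∃ m' : ℕ,
      ∀ Δt ∈ Set.Ioc (0:ℝ) Δtstar, ∀ φ : Torus d → ℝ, TSmooth φ →
        |(∫ x, φ x ∂(νd Δt)) - (∫ x, φ x * hWfun x ∂ν)
            - Δt ^ p * ∫ x, φ x * (v x / hWfun x - ∫ y, v y ∂ν) * hWfun x ∂ν|
          ≤ C * Δt ^ (p + 1) * TCmNorm m' φ := by
  classical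
  have := hνprob
  have := hκfin
  obtain ⟨a, ha, hap⟩ : ∃ a : ℕ → ℝ, (∀ k ∈ Finset.Icc 1 p, ∀ φ, TSmooth φ →
      ∫ x, At k φ x * hWfun x ∂ν = a k * ∫ x, φ x * hWfun x ∂ν) ∧
      a (p + 1) = (∫ y, At (p + 1) hWhat y * hWfun y ∂ν) / (∫ y, hWhat y * hWfun y ∂ν) := by
    choose! b hb using hinv
    refine ⟨Function.update b (p + 1) ((∫ y, At (p + 1) hWhat y * hWfun y ∂ν) /
      (∫ y, hWhat y * hWfun y ∂ν)), fun k hk φ hφ => ?_, by simp⟩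
    rw [Function.update_of_ne (by rw [Finset.mem_Icc] at hk; omega)]
    exact hb k hk φ hφ
  have hAt1' : ∀ φ, At 1 φ = A1 φ + fun x => W x * φ x := fun φ => funext fun x => hAt1 φ x
  have ha1 : a 1 = lam := by
    have := ha 1 (by rw [Finset.mem_Icc]; omega) (fun _ => 1) (TSmooth.const 1)
    simp only [hAt1, hA1one, zero_add, mul_one, one_mul, hfunnorm, hWlam] at this
    exact this.symm
  have hS : ∀ k ∈ Finset.Icc 1 (p + 1), ∀ φ, TSmooth φ → TSmooth (At k φ) := by
    intro k hk φ hφ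
    rw [Finset.mem_Icc] at hk
    by_cases h1 : k = 1
    · rw [h1, hAt1']
      exact (hA1map φ hφ).add (hWsm.mul hφ)
    · exact hAtmap k (by rw [Finset.mem_Icc]; omega) φ hφ
  have hadd : ∀ k ∈ Finset.Icc 1 (p + 1), ∀ φ ψ, TSmooth φ → TSmooth ψ →
      At k (φ + ψ) = At k φ + At k ψ := by
    intro k hk φ ψ hφ hψ
    rw [Finset.mem_Icc] at hk
    by_cases h1 : k = 1
    · rw [h1]
      funext x
      simp only [hAt1, hA1add φ ψ hφ hψ, Pi.add_apply]
      ring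
    · exact hAtadd k (by rw [Finset.mem_Icc]; omega) φ ψ hφ hψ
  have hsmul : ∀ k ∈ Finset.Icc 1 (p + 1), ∀ (c : ℝ) φ, TSmooth φ →
      At k (c • φ) = c • At k φ := by
    intro k hk c φ hφ
    rw [Finset.mem_Icc] at hk
    by_cases h1 : k = 1
    · rw [h1]
      funext x
      simp only [hAt1, hA1smul c φ hφ, Pi.smul_apply, smul_eq_mul]
      ring
    · exact hAtsmul k (by rw [Finset.mem_Icc]; omega) c φ hφ
  obtain ⟨B, hB⟩ : ∃ B : ℕ → SmSpace d →ₗ[ℝ] SmSpace d, ∀ j, j ≤ p → ∀ φ x,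
      (B j φ).1 x = At (j + 1) φ.1 x - a (j + 1) * φ.1 x := by
    have : ∀ j, ∃ b : SmSpace d →ₗ[ℝ] SmSpace d, j ≤ p → ∀ φ x,
      (b φ).1 x = At (j + 1) φ.1 x - a (j + 1) * φ.1 x := by
      intro j
      by_cases hj : j ≤ p
      · have hk : j + 1 ∈ Finset.Icc 1 (p + 1) := by rw [Finset.mem_Icc]; omega
        refine ⟨{ toFun := fun φ => ⟨At (j + 1) φ.1 + (- a (j + 1)) • φ.1,
                    (hS _ hk φ.1 φ.2).add (TSmooth.smul _ φ.2)⟩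
                  map_add' := fun φ ψ => ?_
                  map_smul' := fun c φ => ?_ }, fun _ φ x => ?_⟩
        · apply Subtype.ext
          funext x
          simp only [Submodule.coe_add, hadd _ hk _ _ φ.2 ψ.2, Pi.add_apply, Pi.smul_apply,
            smul_eq_mul]
          ring
        · apply Subtype.ext
          funext x
          simp only [Submodule.coe_smul, hsmul _ hk c _ φ.2, Pi.add_apply, Pi.smul_apply,
            smul_eq_mul, RingHom.id_apply]
          ring
        · simp only [LinearMap.coe_mk, AddHom.coe_mk, Pi.add_apply, Pi.smul_apply, smul_eq_mul]
          ring
      · exact ⟨0, fun h => absurd h hj⟩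
    choose B hB using this
    exact ⟨B, hB⟩
  obtain ⟨μ, hμ⟩ : ∃ μ : ℝ → SmSpace d →ₗ[ℝ] ℝ, ∀ t ∈ Set.Ioc (0:ℝ) Δt0, ∀ φ,
      μ t φ = ∫ x, φ.1 x ∂(νd t) := by
    have : ∀ t, ∃ m : SmSpace d →ₗ[ℝ] ℝ, t ∈ Set.Ioc (0:ℝ) Δt0 → ∀ φ,
        m φ = ∫ x, φ.1 x ∂(νd t) := by
      intro t
      by_cases ht : t ∈ Set.Ioc (0:ℝ) Δt0
      · have := (hνd t ht).1
        refine ⟨intL (νd t) (fun _ => 1) (TSmooth.const 1), fun _ φ => ?_⟩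
        simp [intL_apply]
      · exact ⟨0, fun h => absurd h ht⟩
    choose μ hμ using this
    exact ⟨μ, hμ⟩
  have hμB : ∀ t ∈ Set.Ioc (0:ℝ) Δt0, ∀ (φ : SmSpace d) (Bd : ℝ), (∀ x, |φ.1 x| ≤ Bd) →
      |μ t φ| ≤ Bd := by
    intro t ht φ Bd h
    have := (hνd t ht).1
    rw [hμ t ht, ← Real.norm_eq_abs]
    refine (norm_integral_le_of_norm_le_const (C := Bd) (Filter.Eventually.of_forall h)).trans ?_
    simp
  have hIoc : ∀ t ∈ Set.Ioc (0:ℝ) (min Δt0 1), t ∈ Set.Ioc (0:ℝ) Δt0 :=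
    fun t ht => ⟨ht.1, ht.2.trans (min_le_left _ _)⟩
  have hπB : ∀ j, j ≤ p → ∀ ψ : SmSpace d, intL ν hWfun hfunS (B j ψ) =
      ∫ x, At (j + 1) ψ.1 x * hWfun x ∂ν - a (j + 1) * ∫ x, ψ.1 x * hWfun x ∂ν := by
    intro j hj ψ
    have hk : j + 1 ∈ Finset.Icc 1 (p + 1) := by rw [Finset.mem_Icc]; omega
    rw [intL_apply, ← integral_const_mul, ← integral_sub
      (((hS _ hk _ ψ.2).mul hfunS).integrable ν)
      ((((TSmooth.mul ψ.2 hfunS)).integrable ν).const_mul _)]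
    congr 1
    funext x
    rw [hB j hj]
    ring
  have hhh : 0 < ∫ y, hWhat y * hWfun y ∂ν := by
    obtain ⟨m, hm, hm'⟩ := (hhatS.mul hfunS).pos_lb (fun x => mul_pos (hhatpos x) (hfunpos x))
    refine lt_of_lt_of_le hm ?_
    have := integral_mono (μ := ν) (integrable_const m) ((hhatS.mul hfunS).integrable ν) hm'
    simpa using this
  obtain ⟨m0, hm0, hm0'⟩ := hhatS.pos_lb hhatpos
  obtain ⟨c, hc, mm, hexp⟩ := hexp
  obtain ⟨τ, hτ, hest⟩ := fk_abstract p hp B (intL ν hWfun hfunS) ⟨fun _ => 1, TSmooth.const 1⟩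
    (by simp [intL_apply, hfunnorm])
    (by
      intro j hj ψ
      rw [hπB j hj.le, ha (j + 1) (by rw [Finset.mem_Icc]; omega) _ ψ.2, sub_self])
    (by
      intro g hg
      obtain ⟨u, ⟨hu1, hu2, hu3⟩, -⟩ := hstab g.1 g.2 hg
      refine ⟨⟨u, hu1⟩, Subtype.ext (funext fun x => ?_)⟩
      rw [hB 0 (Nat.zero_le _), ← hu3 x]
      simp only [zero_add, hAt1, ha1])
    (min Δt0 1) (lt_min hΔt0 one_pos) (min_le_right _ _) μ
    (by
      intro ψ
      obtain ⟨C, -, hC⟩ := TSmooth.bdd ψ.2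
      exact ⟨C, fun t ht => hμB t (hIoc t ht) ψ C hC⟩)
    (by
      intro t ht
      have := (hνd t (hIoc t ht)).1
      rw [hμ t (hIoc t ht)]
      simp)
    (fun t => (∫ q, evolOp (κ t) (fun _ => (1:ℝ)) q ∂(νd t)) - 1 -
      ∑ j ∈ range (p + 1), t ^ (j + 1) * a (j + 1))
    (by
      intro ψ
      refine ⟨c * TCmNorm mm ψ.1, fun t ht => ?_⟩
      have ht' := hIoc t ht
      have := (hνd t ht').1
      have hfix := (hνd t ht').2 ψ.1 (TSmooth.bddMeas ψ.2)
      have hAi : ∀ j ∈ range (p + 1), Integrable (fun x => t ^ (j + 1) * At (j + 1) ψ.1 x) (νd t) := by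
        intro j hj
        rw [Finset.mem_range] at hj
        exact ((hS (j + 1) (by rw [Finset.mem_Icc]; omega) _ ψ.2).integrable _).const_mul _
      have hR := norm_integral_le_of_norm_le_const (μ := νd t)
        (f := fun q => evolOp (κ t) ψ.1 q - ψ.1 q -
          ∑ k ∈ Finset.Icc 1 (p + 1), t ^ k * At k ψ.1 q)
        (Filter.Eventually.of_forall (hexp t ht' ψ.1 ψ.2))
      have hre : ∀ q, ∑ k ∈ Finset.Icc 1 (p + 1), t ^ k * At k ψ.1 q =
          ∑ j ∈ range (p + 1), t ^ (j + 1) * At (j + 1) ψ.1 q := by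
        intro q
        rw [Finset.range_eq_Ico, Finset.sum_Ico_add' (fun k => t ^ k * At k ψ.1 q) 0 (p + 1) 1]
        rfl
      simp only [hre] at hR
      have hiψ : Integrable ψ.1 (νd t) := TSmooth.integrable ψ.2 _
      have hiQ : Integrable (evolOp (κ t) ψ.1) (νd t) := (hQS t ht' _ ψ.2).integrable _
      rw [integral_sub (f := fun x => evolOp (κ t) ψ.1 x - ψ.1 x) (hiQ.sub hiψ) (integrable_finsetSum _ hAi), integral_sub hiQ hiψ,
        integral_finsetSum _ hAi, hfix, probReal_univ, mul_one, Real.norm_eq_abs] at hR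
      refine le_trans (le_of_eq ?_) (hR.trans (le_of_eq (by ring)))
      congr 1
      have hsum : ∑ j ∈ range (p + 1), t ^ (j + 1) * μ t (B j ψ) =
          ∑ j ∈ range (p + 1), ∫ x, t ^ (j + 1) * At (j + 1) ψ.1 x ∂(νd t) -
          (∑ j ∈ range (p + 1), t ^ (j + 1) * a (j + 1)) * μ t ψ := by
        rw [sum_mul, ← sum_sub_distrib]
        refine sum_congr rfl fun j hj => ?_
        have hj' := Finset.mem_range.1 hj
        rw [hμ t ht', hμ t ht', integral_const_mul]
        have hi := (hS (j + 1) (by rw [Finset.mem_Icc]; omega) _ ψ.2).integrable (νd t)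
        have : ∫ x, (B j ψ).1 x ∂(νd t) = ∫ x, At (j + 1) ψ.1 x ∂(νd t) -
            a (j + 1) * ∫ x, ψ.1 x ∂(νd t) := by
          rw [← integral_const_mul, ← integral_sub hi (hiψ.const_mul _)]
          congr 1
          funext x
          exact hB j (by omega) ψ x
        rw [this]
        ring
      rw [hsum, hμ t ht']
      ring)
    ⟨hWhat, hhatS⟩
    (by
      apply Subtype.ext
      funext x
      rw [hB 0 (Nat.zero_le _)]
      simp only [zero_add, hAt1, ha1, hspec, sub_self]
      rfl)
    (by
      rw [hπB p le_rfl, hap]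
      field_simp
      ring)
    m0 hm0
    (by
      intro t ht
      have := (hνd t (hIoc t ht)).1
      rw [hμ t (hIoc t ht)]
      have := integral_mono (μ := νd t) (integrable_const m0) (hhatS.integrable _) hm0'
      simpa using this)
    (intL ν v hvS)
    (by
      intro ψ
      have hψ : TSmooth ψ.1 := ψ.2
      rw [hπB p le_rfl, hap, intL_apply, hAtp1staradj _ _ hψ hfunS]
      have e1 : ∫ x, (B 0 ψ).1 x * v x ∂ν = ∫ x, A1 ψ.1 x * v x ∂ν +
          ∫ x, ψ.1 x * (W x * v x - lam * v x) ∂ν := by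
        rw [← integral_add (((hA1map _ hψ).mul hvS).integrable ν)
          ((hψ.mul (ψ := fun x => W x * v x - lam * v x)
            (ContDiff.sub (hWsm.mul hvS) ((TSmooth.const lam).mul hvS))).integrable ν)]
        congr 1
        funext x
        rw [hB 0 (Nat.zero_le _)]
        simp only [zero_add, hAt1, ha1]
        ring
      rw [e1, hA1staradj _ _ hψ hvS, ← integral_add ((hψ.mul (hA1starmap _ hvS)).integrable ν)
          ((hψ.mul (ψ := fun x => W x * v x - lam * v x)
            (ContDiff.sub (hWsm.mul hvS) ((TSmooth.const lam).mul hvS))).integrable ν),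
        neg_sub, ← integral_const_mul,
        ← integral_sub (((hψ.mul hfunS).integrable ν).const_mul _)
          ((hψ.mul (hAtp1starmap _ hfunS)).integrable ν)]
      congr 1
      funext x
      have := hveq x
      rw [← mul_add, ← add_sub_assoc, this]
      ring)
  have hτ' : τ ∈ Set.Ioc (0:ℝ) Δt0 := hIoc τ hτ
  set one : SmSpace d := ⟨fun _ => 1, TSmooth.const 1⟩ with hone
  obtain ⟨C, hC, m', hfin⟩ := fk_ub (ι := Set.Ioc (0:ℝ) τ)
    (fun t => (t.1 ^ (p + 1))⁻¹ • (μ t.1 - intL ν hWfun hfunS -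
      t.1 ^ p • (intL ν v hvS - intL ν v hvS one • intL ν hWfun hfunS)))
    (by
      rintro ⟨t, ht⟩
      have ht' : t ∈ Set.Ioc (0:ℝ) Δt0 := ⟨ht.1, ht.2.trans hτ'.2⟩
      obtain ⟨K1, hK1⟩ := intL_bound ν hWfun hfunS
      obtain ⟨K2, hK2⟩ := intL_bound ν v hvS
      refine ⟨|(t ^ (p + 1))⁻¹| * (1 + K1 + |t ^ p| * (K2 + |intL ν v hvS one| * K1)),
        fun φ Bd h => ?_⟩
      have h0 := hμB t ht' φ Bd h
      have h1 := hK1 φ Bd h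
      have h2 := hK2 φ Bd h
      simp only [LinearMap.smul_apply, LinearMap.sub_apply, smul_eq_mul]
      rw [abs_mul, mul_assoc]
      refine mul_le_mul_of_nonneg_left ?_ (abs_nonneg _)
      have h3 : |intL ν v hvS φ - intL ν v hvS one * intL ν hWfun hfunS φ| ≤
          K2 * Bd + |intL ν v hvS one| * (K1 * Bd) := by
        refine (abs_sub _ _).trans (add_le_add h2 ?_)
        rw [abs_mul]
        exact mul_le_mul_of_nonneg_left h1 (abs_nonneg _)
      refine (abs_sub _ _).trans ((add_le_add ((abs_sub _ _).trans (add_le_add h0 h1)) ?_).trans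
        (le_of_eq (?_ : (Bd + K1 * Bd) +
          |t ^ p| * (K2 * Bd + |intL ν v hvS one| * (K1 * Bd)) = _)))
      · rw [abs_mul]
        exact mul_le_mul_of_nonneg_left h3 (abs_nonneg _)
      · ring)
    (by
      intro φ
      obtain ⟨K, hK⟩ := hest φ
      refine ⟨K, ?_⟩
      rintro ⟨t, ht⟩
      have := hK t ht
      simp only [LinearMap.smul_apply, LinearMap.sub_apply, smul_eq_mul]
      have htp : 0 < t ^ (p + 1) := pow_pos ht.1 _
      rw [abs_mul, abs_of_pos (inv_pos.2 htp), inv_mul_le_iff₀ htp]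
      exact this.trans (le_of_eq (mul_comm _ _)))
  refine ⟨τ, hτ', C, hC, m', fun t ht φ hφ => ?_⟩
  have ht' : t ∈ Set.Ioc (0:ℝ) Δt0 := ⟨ht.1, ht.2.trans hτ'.2⟩
  have h := hfin ⟨t, ht⟩ ⟨φ, hφ⟩
  have htp : 0 < t ^ (p + 1) := pow_pos ht.1 _
  simp only [LinearMap.smul_apply, LinearMap.sub_apply, smul_eq_mul] at h
  rw [abs_mul, abs_of_pos (inv_pos.2 htp), inv_mul_le_iff₀ htp] at h
  have e : ∫ x, φ x * (v x / hWfun x - ∫ y, v y ∂ν) * hWfun x ∂ν =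
      intL ν v hvS ⟨φ, hφ⟩ - intL ν v hvS one * intL ν hWfun hfunS ⟨φ, hφ⟩ := by
    have h1 : intL ν v hvS one = ∫ y, v y ∂ν := by simp [intL_apply, hone]
    rw [h1, intL_apply, intL_apply, ← integral_const_mul,
      ← integral_sub ((hφ.mul hvS).integrable ν) (((hφ.mul hfunS).integrable ν).const_mul _)]
    congr 1
    funext x
    have := (hfunpos x).ne'
    field_simp
  rw [e]
  rw [hμ t ht'] at h
  refine le_trans h (le_of_eq ?_)
  ring
end

section
/- Let X be a measurable space equipped with a probability measure m, let α ∈ (0,1], and let k : X × X → ℝ be a bounded measurable function with √α ≤ k(q,q') ≤ 1/√α for all q, q' ∈ X. For a probability measure μ on X, define F_μ(q') = (∫_X k(q,q') μ(dq)) / (∫_X ∫_X k(q,q'') μ(dq) m(dq'')). Then F_μ is a probability density with respect to m (i.e., F_μ ≥ 0 and ∫ F_μ dm = 1) and satisfies α ≤ F_μ(q') ≤ 1/α for all q' ∈ X; that is, the renormalized one-step Feynman–Kac evolution of any probability measure μ through a transition kernel with density k has a density with respect to m bounded below by α and above by 1/α. -/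
open MeasureTheory

theorem avg_bounds_aux {X : Type*} [MeasurableSpace X] (μ : Measure X) [IsProbabilityMeasure μ]
    (f : X → ℝ) (hf : AEStronglyMeasurable f μ) (a b : ℝ) (ha : 0 ≤ a)
    (h : ∀ x, a ≤ f x ∧ f x ≤ b) : a ≤ ∫ x, f x ∂μ ∧ ∫ x, f x ∂μ ≤ b := by
  have hi : Integrable f μ := by
    refine Integrable.of_bound hf b (Filter.Eventually.of_forall fun x => ?_)
    rw [Real.norm_eq_abs, abs_of_nonneg (ha.trans (h x).1)]
    exact (h x).2
  constructor
  · have := integral_mono (integrable_const a) hi (fun x => (h x).1)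
    simpa using this
  · have := integral_mono hi (integrable_const b) (fun x => (h x).2)
    simpa using this

/-- Quantitative regularization of the one-step renormalized Feynman–Kac evolution:
if the transition kernel has a density k with respect to a reference probability
measure m satisfying `√α ≤ k ≤ 1/√α`, then the renormalized image of any probability
measure μ has a density with respect to m bounded between α and 1/α. -/
theorem regularized_density_bounds
    {X : Type*} [MeasurableSpace X] (m μ : Measure X)
    [IsProbabilityMeasure m] [IsProbabilityMeasure μ]
    (α : ℝ) (hα : α ∈ Set.Ioc (0:ℝ) 1)
    (k : X × X → ℝ) (hk : Measurable k)
    (hkbd : ∀ q q' : X, Real.sqrt α ≤ k (q, q') ∧ k (q, q') ≤ 1 / Real.sqrt α) :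
    (∀ q' : X, 0 ≤ (∫ q, k (q, q') ∂μ) / (∫ q'', ∫ q, k (q, q'') ∂μ ∂m)) ∧
    (∫ q', (∫ q, k (q, q') ∂μ) / (∫ q'', ∫ q, k (q, q'') ∂μ ∂m) ∂m) = 1 ∧
    (∀ q' : X,
      α ≤ (∫ q, k (q, q') ∂μ) / (∫ q'', ∫ q, k (q, q'') ∂μ ∂m) ∧
      (∫ q, k (q, q') ∂μ) / (∫ q'', ∫ q, k (q, q'') ∂μ ∂m) ≤ 1 / α) := by
  obtain ⟨h0, h1⟩ := hα
  have hs : 0 < Real.sqrt α := Real.sqrt_pos.2 h0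
  have hsq : Real.sqrt α * Real.sqrt α = α := Real.mul_self_sqrt h0.le
  have hg : ∀ q', Real.sqrt α ≤ ∫ q, k (q, q') ∂μ ∧ ∫ q, k (q, q') ∂μ ≤ 1 / Real.sqrt α := by
    intro q'
    exact avg_bounds_aux μ _ (hk.comp (by fun_prop)).aestronglyMeasurable _ _ hs.le
      (fun q => hkbd q q')
  have hgm : StronglyMeasurable (fun q' => ∫ q, k (q, q') ∂μ) :=
    hk.stronglyMeasurable.integral_prod_left'
  have hZ := avg_bounds_aux m _ hgm.aestronglyMeasurable _ _ hs.le hg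
  rw [integral_div]
  generalize (∫ q'', ∫ q, k (q, q'') ∂μ ∂m) = Z at hZ ⊢
  obtain ⟨hZ1, hZ2⟩ := hZ
  have hZ0 : 0 < Z := hs.trans_le hZ1
  rw [le_div_iff₀ hs] at hZ2
  refine ⟨fun q' => div_nonneg (hs.le.trans (hg q').1) hZ0.le, div_self hZ0.ne', fun q' => ?_⟩
  obtain ⟨a, b⟩ := hg q'
  rw [le_div_iff₀ hs] at b
  constructor
  · rw [le_div_iff₀ hZ0]
    nlinarith
  · rw [div_le_div_iff₀ hZ0 h0]
    nlinarith
end
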